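/- Let P ∈ ℝ^{n×n} be symmetric positive semidefinite, q ∈ ℝⁿ, H ∈ ℝ^{m×n}, g ∈ ℝᵐ, D ⊆ ℝⁿ nonempty closed convex, K ⊆ ℝᵐ a nonempty closed convex cone with polar cone K°, and α > 0. For j = 1, 2, let z_j ∈ D, v_j ∈ ℝᵐ, and define w_j⁺ = π_{K°}[v_j + α(H z_j − g)], z_j⁺ = π_D[z_j − α(P z_j + q + Hᵀ w_j⁺)], v_j⁺ = w_j⁺ + α H(z_j⁺ − z_j). Then 0 ≤ ⟨z₁⁺ − z₂⁺, z₁ − z₁⁺ − z₂ + z₂⁺⟩ + ⟨v₁⁺ − v₂⁺, v₁ − v₁⁺ − v₂ + v₂⁺⟩ + α⟨P(z₂ − z₁), z₁⁺ − z₂⁺⟩ + α⟨H(z₁ − z₁⁺ − z₂ + z₂⁺), v₁ − v₁⁺ − v₂ + v₂⁺⟩. -/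

import Mathlib

open scoped RealInnerProductSpace
open Filter Topology Metric ContinuousLinearMap

/-- Projection onto a set: the unique nearest point, when it exists
(it exists and is unique for nonempty closed convex sets in Euclidean space). -/
noncomputable def proj {E : Type*} [NormedAddCommGroup E] [InnerProductSpace ℝ E]
    (S : Set E) (x : E) : E :=
  open Classical in
  if h : ∃ y, y ∈ S ∧ ∀ z ∈ S, ‖x - y‖ ≤ ‖x - z‖ then h.choose else 0

/-- The polar cone `K° = {w | ⟪w, y⟫ ≤ 0 for all y ∈ K}`. -/
def polarCone {E : Type*} [NormedAddCommGroup E] [InnerProductSpace ℝ E]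
    (K : Set E) : Set E := {w | ∀ y ∈ K, ⟪w, y⟫ ≤ 0}

/-- The recession cone `rec D = {y | y + z ∈ D for all z ∈ D}`. -/
def recCone {E : Type*} [NormedAddCommGroup E] (D : Set E) : Set E :=
  {y | ∀ z ∈ D, y + z ∈ D}

/-- The normal cone of `D` at `z`: `N_D(z) = {y | ⟪y, z' - z⟫ ≤ 0 for all z' ∈ D}`. -/
def normalCone {E : Type*} [NormedAddCommGroup E] [InnerProductSpace ℝ E]
    (D : Set E) (z : E) : Set E := {y | ∀ z' ∈ D, ⟪y, z' - z⟫ ≤ 0}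

theorem proj_spec_aux {E : Type*} [NormedAddCommGroup E] [InnerProductSpace ℝ E] [CompleteSpace E]
    (S : Set E) (hne : S.Nonempty) (hcl : IsClosed S) (hc : Convex ℝ S) (x : E) :
    proj S x ∈ S ∧ ∀ s ∈ S, ⟪x - proj S x, s - proj S x⟫ ≤ 0 := by
  have key : ∀ y ∈ S, (‖x - y‖ = ⨅ w : S, ‖x - w‖) ↔ ∀ z ∈ S, ‖x - y‖ ≤ ‖x - z‖ := by
    intro y hy
    have hb : BddBelow (Set.range fun w : S => ‖x - w‖) :=
      ⟨0, by rintro _ ⟨w, rfl⟩; exact norm_nonneg _⟩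
    haveI : Nonempty S := ⟨⟨y, hy⟩⟩
    constructor
    · intro h z hz
      rw [h]
      exact ciInf_le hb (⟨z, hz⟩ : S)
    · intro h
      exact le_antisymm (le_ciInf fun w => h w w.2) (ciInf_le hb (⟨y, hy⟩ : S))
  have hex : ∃ y, y ∈ S ∧ ∀ z ∈ S, ‖x - y‖ ≤ ‖x - z‖ := by
    obtain ⟨y, hy, h⟩ := exists_norm_eq_iInf_of_complete_convex hne hcl.isComplete hc x
    exact ⟨y, hy, (key y hy).1 h⟩
  have hp : proj S x = hex.choose := by
    unfold _root_.proj
    rw [dif_pos hex]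
  have hs := hex.choose_spec
  rw [← hp] at hs
  exact ⟨hs.1, (norm_eq_iInf_iff_real_inner_le_zero hc hs.1).1 ((key _ hs.1).2 hs.2)⟩

theorem polar_aux {E : Type*} [NormedAddCommGroup E] [InnerProductSpace ℝ E] (K : Set E) :
    (polarCone K).Nonempty ∧ IsClosed (polarCone K) ∧ Convex ℝ (polarCone K) := by
  refine ⟨⟨0, fun y _ => by simp⟩, ?_, ?_⟩
  · have : polarCone K = ⋂ y ∈ K, {w | ⟪w, y⟫ ≤ 0} := by
      ext w; simp [polarCone]
    rw [this]
    exact isClosed_biInter fun y _ => isClosed_le (by fun_prop) continuous_const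
  · intro a ha b hb s t hs ht _ y hy
    have h1 := ha y hy
    have h2 := hb y hy
    rw [inner_add_left, real_inner_smul_left, real_inner_smul_left]
    nlinarith [mul_nonneg hs (neg_nonneg.2 h1), mul_nonneg ht (neg_nonneg.2 h2)]

/-- fundamental inner-product inequality satisfied by one PIPG step
applied to two points. -/
theorem stmt15 {n m : ℕ}
    (P : EuclideanSpace ℝ (Fin n) →L[ℝ] EuclideanSpace ℝ (Fin n))
    (hPsa : IsSelfAdjoint P) (hPpsd : ∀ x, 0 ≤ ⟪P x, x⟫)
    (q : EuclideanSpace ℝ (Fin n))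
    (H : EuclideanSpace ℝ (Fin n) →L[ℝ] EuclideanSpace ℝ (Fin m))
    (g : EuclideanSpace ℝ (Fin m))
    (D : Set (EuclideanSpace ℝ (Fin n)))
    (hDne : D.Nonempty) (hDcl : IsClosed D) (hDconv : Convex ℝ D)
    (K : Set (EuclideanSpace ℝ (Fin m)))
    (hKne : K.Nonempty) (hKcl : IsClosed K) (hKconv : Convex ℝ K)
    (hKcone : ∀ w ∈ K, ∀ a : ℝ, 0 ≤ a → a • w ∈ K)
    (α : ℝ) (hα0 : 0 < α)
    (z1 z2 : EuclideanSpace ℝ (Fin n)) (hz1 : z1 ∈ D) (hz2 : z2 ∈ D)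
    (v1 v2 : EuclideanSpace ℝ (Fin m))
    (w1p w2p : EuclideanSpace ℝ (Fin m))
    (z1p z2p : EuclideanSpace ℝ (Fin n))
    (v1p v2p : EuclideanSpace ℝ (Fin m))
    (hw1 : w1p = proj (polarCone K) (v1 + α • (H z1 - g)))
    (hw2 : w2p = proj (polarCone K) (v2 + α • (H z2 - g)))
    (hz1p : z1p = proj D (z1 - α • (P z1 + q + (ContinuousLinearMap.adjoint H) w1p)))
    (hz2p : z2p = proj D (z2 - α • (P z2 + q + (ContinuousLinearMap.adjoint H) w2p)))
    (hv1p : v1p = w1p + α • H (z1p - z1))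
    (hv2p : v2p = w2p + α • H (z2p - z2)) :
    0 ≤ ⟪z1p - z2p, z1 - z1p - z2 + z2p⟫ + ⟪v1p - v2p, v1 - v1p - v2 + v2p⟫
        + α * ⟪P (z2 - z1), z1p - z2p⟫
        + α * ⟪H (z1 - z1p - z2 + z2p), v1 - v1p - v2 + v2p⟫ := by
  obtain ⟨hpn, hpc, hpv⟩ := polar_aux K
  have W1 := proj_spec_aux _ hpn hpc hpv (v1 + α • (H z1 - g))
  have W2 := proj_spec_aux _ hpn hpc hpv (v2 + α • (H z2 - g))
  have Z1 := proj_spec_aux D hDne hDcl hDconv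
    (z1 - α • (P z1 + q + (ContinuousLinearMap.adjoint H) w1p))
  have Z2 := proj_spec_aux D hDne hDcl hDconv
    (z2 - α • (P z2 + q + (ContinuousLinearMap.adjoint H) w2p))
  rw [← hw1] at W1
  rw [← hw2] at W2
  rw [← hz1p] at Z1
  rw [← hz2p] at Z2
  have a1 := W1.2 _ W2.1
  have a2 := W2.2 _ W1.1
  have b1 := Z1.2 _ Z2.1
  have b2 := Z2.2 _ Z1.1
  have A : 0 ≤ ⟪w1p - w2p, (v1 - v2) + α • H (z1 - z2) - (w1p - w2p)⟫ := by
    have e : ⟪w1p - w2p, (v1 - v2) + α • H (z1 - z2) - (w1p - w2p)⟫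
        = -(⟪v1 + α • (H z1 - g) - w1p, w2p - w1p⟫ + ⟪v2 + α • (H z2 - g) - w2p, w1p - w2p⟫) := by
      rw [← neg_sub w1p w2p, inner_neg_right, neg_add, neg_neg, ← sub_eq_add_neg,
        ← inner_sub_left, real_inner_comm]
      congr 1
      rw [map_sub]
      module
    linarith
  have B : 0 ≤ ⟪z1p - z2p, (z1 - z2) - (z1p - z2p)⟫ - α * ⟪P (z1 - z2), z1p - z2p⟫
      - α * ⟪w1p - w2p, H (z1p - z2p)⟫ := by
    have e : ⟪z1p - z2p, (z1 - z2) - (z1p - z2p)⟫ - α * ⟪P (z1 - z2), z1p - z2p⟫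
      - α * ⟪w1p - w2p, H (z1p - z2p)⟫
        = -(⟪z1 - α • (P z1 + q + (ContinuousLinearMap.adjoint H) w1p) - z1p, z2p - z1p⟫
          + ⟪z2 - α • (P z2 + q + (ContinuousLinearMap.adjoint H) w2p) - z2p, z1p - z2p⟫) := by
      rw [← neg_sub z1p z2p, inner_neg_right, neg_add, neg_neg, ← sub_eq_add_neg,
        ← inner_sub_left, real_inner_comm, ← ContinuousLinearMap.adjoint_inner_left,
        ← real_inner_smul_left, ← real_inner_smul_left, ← inner_sub_left, ← inner_sub_left]
      congr 1
      rw [map_sub, map_sub]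
      module
    linarith
  have hP : P (z2 - z1) = - P (z1 - z2) := by rw [← map_neg, neg_sub]
  have hC : ⟪v1p - v2p, v1 - v1p - v2 + v2p⟫ + α * ⟪H (z1 - z1p - z2 + z2p), v1 - v1p - v2 + v2p⟫
      = ⟪w1p - w2p, (v1 - v2) + α • H (z1 - z2) - (w1p - w2p)⟫
        - α * ⟪w1p - w2p, H (z1p - z2p)⟫ := by
    rw [← real_inner_smul_left, ← inner_add_left, ← real_inner_smul_right, ← inner_sub_right]
    subst hv1p hv2p
    simp only [map_sub, map_add]
    congr 1 <;> module
  have hD : z1 - z1p - z2 + z2p = (z1 - z2) - (z1p - z2p) := by abel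
  rw [hP, inner_neg_left]
  have hE : ⟪z1p - z2p, z1 - z1p - z2 + z2p⟫ = ⟪z1p - z2p, (z1 - z2) - (z1p - z2p)⟫ := by rw [hD]
  linarith
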